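/- Let M be a perfect matching of G (n even). Then there exists a set N of n/6 edges of G, none belonging to M, such that no edge of M contains an endpoint of more than one edge of N, and c(N) ≥ (1/4)·c(E_1) + (1/2)·c(E_2); moreover (1/4)·c(E_1) + (1/2)·c(E_2) = (1/4)·c(E(P*) ∖ M) + (1/4)·c(E_2). -/

import Mathlib

open Finset
open scoped Classical

namespace MW3PP

/-- A 3-path `xyz`: a path on three distinct vertices with middle vertex `y`. -/
structure P3 (V : Type*) where
  x : V
  y : V
  z : V
  hxy : x ≠ y
  hyz : y ≠ z
  hxz : x ≠ z

variable {V : Type*} [Fintype V] [DecidableEq V]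

/-- The vertex set of a 3-path. -/
def P3.verts (p : P3 V) : Finset V := {p.x, p.y, p.z}

/-- The two edges of a 3-path. -/
def P3.edges (p : P3 V) : Finset (Sym2 V) := {s(p.x, p.y), s(p.y, p.z)}

/-- The weight of a 3-path. -/
def P3.wt (w : Sym2 V → ℝ) (p : P3 V) : ℝ := w s(p.x, p.y) + w s(p.y, p.z)

/-- The total weight of a set of edges. -/
def ew (w : Sym2 V → ℝ) (F : Finset (Sym2 V)) : ℝ := ∑ e ∈ F, w e

/-- The total weight of a set of 3-paths. -/
def pw (w : Sym2 V → ℝ) (P : Finset (P3 V)) : ℝ := ∑ p ∈ P, p.wt w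

/-- `∑_{xyz ∈ S} max (w (xy)) (w (yz))`. -/
def maxSum (w : Sym2 V → ℝ) (S : Finset (P3 V)) : ℝ :=
  ∑ p ∈ S, max (w s(p.x, p.y)) (w s(p.y, p.z))

/-- A perfect 3-path packing: `n/3` pairwise vertex-disjoint 3-paths covering all vertices. -/
def IsPacking (P : Finset (P3 V)) : Prop :=
  P.card = Fintype.card V / 3 ∧
  (∀ p ∈ P, ∀ q ∈ P, p ≠ q → Disjoint p.verts q.verts) ∧
  (∀ v : V, ∃ p ∈ P, v ∈ p.verts)

/-- A maximum-weight perfect 3-path packing. -/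
def IsMaxPacking (w : Sym2 V → ℝ) (P : Finset (P3 V)) : Prop :=
  IsPacking P ∧ ∀ Q : Finset (P3 V), IsPacking Q → pw w Q ≤ pw w P

/-- A matching: a set of pairwise vertex-disjoint (non-loop) edges. -/
def IsMatching (M : Finset (Sym2 V)) : Prop :=
  (∀ e ∈ M, ¬ e.IsDiag) ∧
  ∀ e ∈ M, ∀ f ∈ M, e ≠ f → ∀ v : V, v ∈ e → v ∉ f

/-- A maximum-weight matching among all matchings of size `k`. -/
def IsMaxMatchingOfSize (w : Sym2 V → ℝ) (k : ℕ) (M : Finset (Sym2 V)) : Prop :=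
  IsMatching M ∧ M.card = k ∧
  ∀ M' : Finset (Sym2 V), IsMatching M' → M'.card = k → ew w M' ≤ ew w M

/-- `v ∈ V(M)` : vertex `v` is covered by the matching `M`. -/
def covered (M : Finset (Sym2 V)) (v : V) : Prop := ∃ e ∈ M, v ∈ e

/-- `e_u` : the edge of `M` containing `u` (junk value if there is none). -/
noncomputable def eMatch (M : Finset (Sym2 V)) (u : V) : Sym2 V :=
  if h : ∃ e ∈ M, u ∈ e then h.choose else s(u, u)

/-- The cost `c` of an edge with respect to a matching `M`:
`c(uv) = w(uv) - min (w (e_u)) (w (e_v))` if both endpoints are covered by `M`,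
and `c(uv) = w(uv)` otherwise. -/
noncomputable def cost (w : Sym2 V → ℝ) (M : Finset (Sym2 V)) : Sym2 V → ℝ :=
  Sym2.lift ⟨fun u v =>
    if covered M u ∧ covered M v then
      w s(u, v) - min (w (eMatch M u)) (w (eMatch M v))
    else w s(u, v), by
      intro u v
      dsimp only
      by_cases h : covered M u ∧ covered M v
      · rw [if_pos h, if_pos (show covered M v ∧ covered M u from ⟨h.2, h.1⟩),
          Sym2.eq_swap, min_comm]
      · rw [if_neg h, if_neg (show ¬(covered M v ∧ covered M u) from fun h' => h ⟨h'.2, h'.1⟩),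
          Sym2.eq_swap]⟩

/-- The total cost of a set of edges. -/
noncomputable def cw (w : Sym2 V → ℝ) (M F : Finset (Sym2 V)) : ℝ := ∑ e ∈ F, cost w M e

/-- The number of vertices of the 3-path `p` covered by `M`. -/
noncomputable def kcnt (M : Finset (Sym2 V)) (p : P3 V) : ℕ :=
  (p.verts.filter fun v => covered M v).card

/-- Exactly one of the two edges of `p` lies in `M`. -/
def exOne (M : Finset (Sym2 V)) (p : P3 V) : Prop :=
  (s(p.x, p.y) ∈ M ∧ s(p.y, p.z) ∉ M) ∨ (s(p.x, p.y) ∉ M ∧ s(p.y, p.z) ∈ M)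

def cls1 (M : Finset (Sym2 V)) (p : P3 V) : Prop := kcnt M p = 0
def cls2 (M : Finset (Sym2 V)) (p : P3 V) : Prop := kcnt M p = 1 ∧ ¬ covered M p.y
def cls3 (M : Finset (Sym2 V)) (p : P3 V) : Prop := kcnt M p = 1 ∧ covered M p.y
def cls4 (M : Finset (Sym2 V)) (p : P3 V) : Prop := kcnt M p = 2 ∧ ¬ covered M p.y
def cls5 (M : Finset (Sym2 V)) (p : P3 V) : Prop := kcnt M p = 2 ∧ covered M p.y ∧ exOne M p
def cls6 (M : Finset (Sym2 V)) (p : P3 V) : Prop :=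
  kcnt M p = 2 ∧ covered M p.y ∧ s(p.x, p.y) ∉ M ∧ s(p.y, p.z) ∉ M
def cls7 (M : Finset (Sym2 V)) (p : P3 V) : Prop := kcnt M p = 3 ∧ exOne M p
def cls8 (M : Finset (Sym2 V)) (p : P3 V) : Prop :=
  kcnt M p = 3 ∧ s(p.x, p.y) ∉ M ∧ s(p.y, p.z) ∉ M

/-- The subset of a set of 3-paths satisfying a predicate. -/
noncomputable def psel (P : Finset (P3 V)) (c : P3 V → Prop) : Finset (P3 V) := P.filter c

/-- The set of all edges of the 3-paths in `S`. -/
def Esub (S : Finset (P3 V)) : Finset (Sym2 V) := S.biUnion P3.edges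

/-- The heaviest edge of a 3-path (the edge `xy` in case of a tie). -/
noncomputable def heavy (w : Sym2 V → ℝ) (p : P3 V) : Sym2 V :=
  if w s(p.y, p.z) ≤ w s(p.x, p.y) then s(p.x, p.y) else s(p.y, p.z)

noncomputable def X1 (w : Sym2 V → ℝ) (P : Finset (P3 V)) (M : Finset (Sym2 V)) :
    Finset (Sym2 V) := (psel P (cls1 M)).image (heavy w)
noncomputable def X2 (P : Finset (P3 V)) (M : Finset (Sym2 V)) : Finset (Sym2 V) :=
  (psel P (cls2 M)).image fun p => if covered M p.x then s(p.x, p.y) else s(p.y, p.z)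
noncomputable def X3 (w : Sym2 V → ℝ) (P : Finset (P3 V)) (M : Finset (Sym2 V)) :
    Finset (Sym2 V) := (psel P (cls3 M)).image (heavy w)
noncomputable def X4 (w : Sym2 V → ℝ) (P : Finset (P3 V)) (M : Finset (Sym2 V)) :
    Finset (Sym2 V) := (psel P (cls4 M)).image (heavy w)
noncomputable def X5 (P : Finset (P3 V)) (M : Finset (Sym2 V)) : Finset (Sym2 V) :=
  (psel P (cls5 M)).image fun p => if s(p.x, p.y) ∈ M then s(p.y, p.z) else s(p.x, p.y)
noncomputable def X6 (P : Finset (P3 V)) (M : Finset (Sym2 V)) : Finset (Sym2 V) :=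
  (psel P (cls6 M)).image fun p => if covered M p.x then s(p.y, p.z) else s(p.x, p.y)
noncomputable def X7 (P : Finset (P3 V)) (M : Finset (Sym2 V)) : Finset (Sym2 V) :=
  (psel P (cls7 M)).image fun p => if s(p.x, p.y) ∈ M then s(p.y, p.z) else s(p.x, p.y)
noncomputable def X8 (w : Sym2 V → ℝ) (P : Finset (P3 V)) (M : Finset (Sym2 V)) :
    Finset (Sym2 V) := (psel P (cls8 M)).image (heavy w)

noncomputable def Y1 (w : Sym2 V → ℝ) (P : Finset (P3 V)) (M : Finset (Sym2 V)) :
    Finset (Sym2 V) := Esub (psel P (cls1 M)) \ X1 w P M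
noncomputable def Y2 (P : Finset (P3 V)) (M : Finset (Sym2 V)) : Finset (Sym2 V) :=
  Esub (psel P (cls2 M)) \ X2 P M
noncomputable def Y3 (w : Sym2 V → ℝ) (P : Finset (P3 V)) (M : Finset (Sym2 V)) :
    Finset (Sym2 V) := Esub (psel P (cls3 M)) \ X3 w P M
noncomputable def Y4 (w : Sym2 V → ℝ) (P : Finset (P3 V)) (M : Finset (Sym2 V)) :
    Finset (Sym2 V) := Esub (psel P (cls4 M)) \ X4 w P M
noncomputable def Y5 (P : Finset (P3 V)) (M : Finset (Sym2 V)) : Finset (Sym2 V) :=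
  Esub (psel P (cls5 M)) \ X5 P M
noncomputable def Y6 (P : Finset (P3 V)) (M : Finset (Sym2 V)) : Finset (Sym2 V) :=
  Esub (psel P (cls6 M)) \ X6 P M
noncomputable def Y7 (P : Finset (P3 V)) (M : Finset (Sym2 V)) : Finset (Sym2 V) :=
  Esub (psel P (cls7 M)) \ X7 P M
noncomputable def Y8 (w : Sym2 V → ℝ) (P : Finset (P3 V)) (M : Finset (Sym2 V)) :
    Finset (Sym2 V) := Esub (psel P (cls8 M)) \ X8 w P M

/-- An edge is a middle edge (w.r.t. `M`) if exactly one of its endpoints lies in `V(M)`. -/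
def isMiddle (M : Finset (Sym2 V)) (e : Sym2 V) : Prop :=
  ∃ u v : V, e = s(u, v) ∧ covered M u ∧ ¬ covered M v

/-- Two edges share a vertex. -/
def shares (e f : Sym2 V) : Prop := ∃ v, v ∈ e ∧ v ∈ f

/-- `g` is a middle edge of some 3-path in `S`. -/
def middleIn (M : Finset (Sym2 V)) (S : Finset (P3 V)) (g : Sym2 V) : Prop :=
  (∃ p ∈ S, g ∈ p.edges) ∧ isMiddle M g

/-- The 3-paths of `P` lying in classes 2, 3 or 4. -/
noncomputable def P234 (P : Finset (P3 V)) (M : Finset (Sym2 V)) : Finset (P3 V) :=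
  psel P fun p => cls2 M p ∨ cls3 M p ∨ cls4 M p

/-- `M_1`: edges of `M` sharing a vertex with at least one middle edge of a 3-path of `P*_6`. -/
noncomputable def Mset1 (P : Finset (P3 V)) (M : Finset (Sym2 V)) : Finset (Sym2 V) :=
  M.filter fun f => ∃ g, middleIn M (psel P (cls6 M)) g ∧ shares f g

/-- `M_2`: edges of `M` sharing a vertex with at least one middle edge, all middle edges met
belonging to 3-paths of `P*_2 ∪ P*_3 ∪ P*_4`. -/
noncomputable def Mset2 (P : Finset (P3 V)) (M : Finset (Sym2 V)) : Finset (Sym2 V) :=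
  M.filter fun f =>
    (∃ g, middleIn M P g ∧ shares f g) ∧
    ∀ g, middleIn M P g → shares f g → middleIn M (P234 P M) g

/-- `M_3 = M ∩ E(P*_7)`. -/
noncomputable def Mset3 (P : Finset (P3 V)) (M : Finset (Sym2 V)) : Finset (Sym2 V) :=
  M ∩ Esub (psel P (cls7 M))

/-- `M_4 = M ∩ E(P*_5)`. -/
noncomputable def Mset4 (P : Finset (P3 V)) (M : Finset (Sym2 V)) : Finset (Sym2 V) :=
  M ∩ Esub (psel P (cls5 M))

/-- The middle edges of 3-paths of `P*_6`. -/
noncomputable def mid6 (P : Finset (P3 V)) (M : Finset (Sym2 V)) : Finset (Sym2 V) :=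
  (Esub (psel P (cls6 M))).filter (isMiddle M)

/-- `M'_1`: edges of `M_1` meeting exactly one middle edge of a 3-path of `P*_6` and
no middle edge of a 3-path of `P*_2 ∪ P*_3 ∪ P*_4`. -/
noncomputable def Mset1' (P : Finset (P3 V)) (M : Finset (Sym2 V)) : Finset (Sym2 V) :=
  (Mset1 P M).filter fun f =>
    ((mid6 P M).filter fun g => shares f g).card = 1 ∧
    ∀ g, middleIn M (P234 P M) g → ¬ shares f g

/-- `M''_1`: edges of `M_1` meeting two middle edges of 3-paths of `P*_6`. -/
noncomputable def Mset1'' (P : Finset (P3 V)) (M : Finset (Sym2 V)) : Finset (Sym2 V) :=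
  (Mset1 P M).filter fun f => ((mid6 P M).filter fun g => shares f g).card = 2

/-- `M'''_1`: edges of `M_1` meeting exactly one middle edge of a 3-path of `P*_6` and
at least one middle edge of a 3-path of `P*_2 ∪ P*_3 ∪ P*_4`. -/
noncomputable def Mset1''' (P : Finset (P3 V)) (M : Finset (Sym2 V)) : Finset (Sym2 V) :=
  (Mset1 P M).filter fun f =>
    ((mid6 P M).filter fun g => shares f g).card = 1 ∧
    ∃ g, middleIn M (P234 P M) g ∧ shares f g

/-- Assumption on `P*`: for every 3-path `xyz ∈ P*` with `y ∉ V(M)` and `x, z ∈ V(M)`,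
the vertices `x` and `z` lie in two distinct edges of `M`. -/
def Ass (P : Finset (P3 V)) (M : Finset (Sym2 V)) : Prop :=
  ∀ p ∈ P, ¬ covered M p.y → covered M p.x → covered M p.z →
    ∃ e ∈ M, ∃ f ∈ M, p.x ∈ e ∧ p.z ∈ f ∧ e ≠ f

/-- An admissible edge w.r.t. `M`: either both endpoints are in `V(M)` and lie in two distinct
edges of `M`, or exactly one endpoint is in `V(M)`. -/
def goodEdge (M : Finset (Sym2 V)) (e : Sym2 V) : Prop :=
  (∃ u v : V, e = s(u, v) ∧ covered M u ∧ covered M v ∧ ∀ f ∈ M, ¬(u ∈ f ∧ v ∈ f)) ∨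
  (∃ u v : V, e = s(u, v) ∧ covered M u ∧ ¬ covered M v)


/-- `v` is an endpoint of the edge joining `y p` to `f p`. -/
def IsEnd {ι α : Type*} (y f : ι → α) (p : ι) (v : α) : Prop := v = y p ∨ v = f p

/-- The endpoints of the edges indexed by `S` are closed under `mate`, that is, these edges
together with the matching given by `mate` form alternating cycles. -/
def MateClosed {ι α : Type*} (mate : α → α) (y f : ι → α) (S : Finset ι) : Prop :=
  ∀ p ∈ S, ∀ v, IsEnd y f p v → ∃ q ∈ S, IsEnd y f q (mate v)

/-- No matching edge meets two different edges indexed by `S`. -/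
def MateIndep {ι α : Type*} (mate : α → α) (y f : ι → α) (S : Finset ι) : Prop :=
  ∀ p ∈ S, ∀ q ∈ S, p ≠ q → ∀ v, IsEnd y f p v → ¬ IsEnd y f q (mate v)

theorem even_card_of_involution {α : Type*} [DecidableEq α] (mate : α → α)
    (hmate : ∀ v, mate (mate v) = v) (hne : ∀ v, mate v ≠ v) (W : Finset α)
    (hW : ∀ v ∈ W, mate v ∈ W) : Even W.card := by
  have h : ∑ _v ∈ W, (1 : ZMod 2) = 0 :=
    Finset.sum_involution (fun v _ => mate v) (fun _ _ => by decide)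
      (fun v _ _ => hne v) (fun v hv => hW v hv) (fun v _ => hmate v)
  rw [Finset.sum_const, nsmul_eq_mul, mul_one] at h
  exact (ZMod.natCast_eq_zero_iff_even).1 h

theorem exists_split_of_leaf {ι α : Type*} [DecidableEq ι] (mate : α → α)
    (hmate : ∀ v, mate (mate v) = v) (y f : ι → α) (P : Finset ι)
    (hdisj : ∀ p ∈ P, ∀ q ∈ P, ∀ v, IsEnd y f p v → IsEnd y f q v → p = q)
    (hac : ∀ S ⊆ P, MateClosed mate y f S → S = ∅) (k : ℕ) :
    ∀ T ⊆ P, T.card = k → ∀ e ∈ T, ∀ v, IsEnd y f e v → (∀ q ∈ T, ¬ IsEnd y f q (mate v)) →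
      ∃ F₁ F₂ : Finset ι, Disjoint F₁ F₂ ∧ F₁ ∪ F₂ = T ∧ e ∈ F₁ ∧ MateIndep mate y f F₁ ∧
        MateIndep mate y f F₂ ∧ (F₁.card = F₂.card ∨ F₁.card = F₂.card + 1) := by
  induction k with
  | zero =>
    intro T _ hT e he
    rw [Finset.card_eq_zero.1 hT] at he
    simp at he
  | succ k ih =>
    intro T hTP hT e he v hv hvT
    have hcard : (T.erase e).card = k := by rw [Finset.card_erase_of_mem he, hT]; rfl
    have hsub : T.erase e ⊆ P := (Finset.erase_subset _ _).trans hTP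
    by_cases hemp : T.erase e = ∅
    · refine ⟨{e}, ∅, by simp, ?_, by simp, ?_, ?_, by simp⟩
      · rw [Finset.union_empty, ← Finset.insert_erase he, hemp]
        rfl
      · intro p hp q hq hpq
        rw [Finset.mem_singleton] at hp hq
        exact absurd (hp.trans hq.symm) hpq
      · intro p hp
        simp at hp
    -- the next leaf `r`, the only edge that may be adjacent to `e`
    obtain ⟨r, hr, v', hv', hvr, hadj⟩ : ∃ r ∈ T.erase e, ∃ v', IsEnd y f r v' ∧
        (∀ q ∈ T.erase e, ¬ IsEnd y f q (mate v')) ∧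
        ∀ q ∈ T.erase e, ∀ u, IsEnd y f e u → IsEnd y f q (mate u) → q = r := by
      by_cases h : ∃ r ∈ T.erase e, ∃ u, IsEnd y f e u ∧ IsEnd y f r (mate u)
      · obtain ⟨r, hr, u, hu, hru⟩ := h
        refine ⟨r, hr, mate u, hru, ?_, ?_⟩
        · intro q hq hqu
          rw [hmate] at hqu
          have := hdisj q (hsub hq) e (hTP he) u hqu hu
          exact (Finset.ne_of_mem_erase hq) this
        · intro q hq u' hu' hqu'
          have huv : u ≠ v := fun h => hvT r (Finset.mem_of_mem_erase hr) (h ▸ hru)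
          have huv' : u' ≠ v := fun h => hvT q (Finset.mem_of_mem_erase hq) (h ▸ hqu')
          have huu : u' = u := by
            unfold IsEnd at hu hu' hv
            grind
          exact hdisj q (hsub hq) r (hsub hr) (mate u) (huu ▸ hqu') hru
      · have hnc : ¬ MateClosed mate y f (T.erase e) := fun hc => hemp (hac _ hsub hc)
        unfold MateClosed at hnc
        push Not at hnc
        obtain ⟨r, hr, v', hv', hvr⟩ := hnc
        exact ⟨r, hr, v', hv', hvr, fun q hq u hu hqu => absurd ⟨q, hq, u, hu, hqu⟩ h⟩
    obtain ⟨F₁, F₂, hd, hU, hrF, hi₁, hi₂, hc⟩ := ih _ hsub hcard r hr v' hv' hvr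
    have heU : e ∉ F₁ ∪ F₂ := by rw [hU]; exact Finset.notMem_erase e T
    have heF₁ : e ∉ F₁ := fun h => heU (Finset.mem_union_left _ h)
    have heF₂ : e ∉ F₂ := fun h => heU (Finset.mem_union_right _ h)
    have hadj₂ : ∀ q ∈ F₂, ∀ u, IsEnd y f e u → ¬ IsEnd y f q (mate u) := by
      intro q hq u hu hqu
      have hqr := hadj q (hU ▸ Finset.mem_union_right _ hq) u hu hqu
      exact Finset.disjoint_left.1 hd hrF (hqr ▸ hq)
    refine ⟨insert e F₂, F₁, ?_, ?_, Finset.mem_insert_self _ _, ?_, hi₁, ?_⟩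
    · rw [Finset.disjoint_insert_left]
      exact ⟨heF₁, hd.symm⟩
    · rw [Finset.insert_union, Finset.union_comm, hU, Finset.insert_erase he]
    · intro p hp q hq hpq u hpu hqu
      rcases Finset.mem_insert.1 hp with rfl | hpF
      · rcases Finset.mem_insert.1 hq with rfl | hqF
        · exact hpq rfl
        · exact hadj₂ q hqF u hpu hqu
      · rcases Finset.mem_insert.1 hq with rfl | hqF
        · exact hadj₂ p hpF (mate u) hqu (by rwa [hmate])
        · exact hi₂ p hpF q hqF hpq u hpu hqu
    · rw [Finset.card_insert_of_notMem heF₂]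
      omega

/-- If the edges indexed by `P` form no alternating cycle with the matching, then they split
evenly into two sets none of which has two edges met by the same matching edge. -/
theorem exists_even_split {ι α : Type*} [DecidableEq ι] (mate : α → α)
    (hmate : ∀ v, mate (mate v) = v) (y f : ι → α) (P : Finset ι)
    (hdisj : ∀ p ∈ P, ∀ q ∈ P, ∀ v, IsEnd y f p v → IsEnd y f q v → p = q)
    (hac : ∀ S ⊆ P, MateClosed mate y f S → S = ∅) (k : ℕ) (hk : P.card = 2 * k) :
    ∃ F₁ F₂ : Finset ι, Disjoint F₁ F₂ ∧ F₁ ∪ F₂ = P ∧ MateIndep mate y f F₁ ∧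
      MateIndep mate y f F₂ ∧ F₁.card = k ∧ F₂.card = k := by
  by_cases hP : P = ∅
  · subst hP
    have hk0 : k = 0 := by simpa using hk.symm
    refine ⟨∅, ∅, by simp, by simp, ?_, ?_, by simp [hk0], by simp [hk0]⟩ <;>
      · intro p hp
        simp at hp
  · have hnc : ¬ MateClosed mate y f P := fun hc => hP (hac _ subset_rfl hc)
    unfold MateClosed at hnc
    push Not at hnc
    obtain ⟨e, he, v, hv, hvP⟩ := hnc
    obtain ⟨F₁, F₂, hd, hU, -, hi₁, hi₂, hc⟩ :=
      exists_split_of_leaf mate hmate y f P hdisj hac _ P subset_rfl rfl e he v hv hvP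
    have hcard := Finset.card_union_of_disjoint hd
    rw [hU] at hcard
    exact ⟨F₁, F₂, hd, hU, hi₁, hi₂, by omega, by omega⟩

/-- Each `p ∈ P` stands for a path with middle vertex `y p`, from which one of the edges to
`t true p` and `t false p` is to be chosen; the two coincide if only one choice is allowed. -/
structure EdgeChoice {ι α : Type*} (mate : α → α) (P : Finset ι) (y : ι → α)
    (t : Bool → ι → α) : Prop where
  invol : ∀ v, mate (mate v) = v
  mate_ne : ∀ v, mate v ≠ v
  disj : ∀ p ∈ P, ∀ q ∈ P, ∀ s s' v, IsEnd y (t s) p v → IsEnd y (t s') q v → p = q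
  end_ne : ∀ p ∈ P, ∀ s, t s p ≠ y p
  not_mate : ∀ p ∈ P, ∀ s, mate (t s p) ≠ y p
  forced : ∀ p ∈ P, t true p = t false p → ∀ q ∈ P, ∀ s, ¬ IsEnd y (t s) q (mate (y p))

/-- The chosen endpoints according to `σ`. -/
def chosen {ι α : Type*} (t : Bool → ι → α) (σ : ι → Bool) (p : ι) : α := t (σ p) p

namespace EdgeChoice

variable {ι α : Type*} {mate : α → α} {P : Finset ι} {y : ι → α} {t : Bool → ι → α}

theorem disj_chosen (h : EdgeChoice mate P y t) {p q : ι} (hp : p ∈ P) (hq : q ∈ P)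
    {σ τ : ι → Bool} {v : α} (hpv : IsEnd y (chosen t σ) p v)
    (hqv : IsEnd y (chosen t τ) q v) : p = q :=
  h.disj p hp q hq (σ p) (τ q) v hpv hqv

/-- A path on an alternating cycle has two different choices. -/
theorem ne_of_mem_closed (h : EdgeChoice mate P y t) {σ : ι → Bool} {S : Finset ι} (hS : S ⊆ P)
    (hc : MateClosed mate y (chosen t σ) S) {p : ι} (hp : p ∈ S) : t true p ≠ t false p := by
  intro he
  obtain ⟨q, hq, hqv⟩ := hc p hp (y p) (Or.inl rfl)
  exact h.forced p (hS hp) he q (hS hq) (σ q) hqv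

/-- Switching a path on an alternating cycle does not put it on a new alternating cycle. -/
theorem notMem_closed_of_switch [DecidableEq ι] [DecidableEq α] (h : EdgeChoice mate P y t)
    {σ τ : ι → Bool} {p : ι}
    (hστ : ∀ q, q ≠ p → τ q = σ q) (hp : τ p = !σ p) {C S : Finset ι} (hC : C ⊆ P) (hS : S ⊆ P)
    (hCc : MateClosed mate y (chosen t σ) C) (hSc : MateClosed mate y (chosen t τ) S)
    (hpC : p ∈ C) : p ∉ S := by
  intro hpS
  have hne := h.ne_of_mem_closed hC hCc hpC
  have hends : t (!σ p) p ≠ t (σ p) p := by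
    cases σ p
    · exact hne
    · exact hne.symm
  set f := chosen t σ with hf
  set T := (C ∩ S).erase p with hT
  have hTC : ∀ q ∈ T, q ∈ C ∧ q ∈ S ∧ q ≠ p := by
    intro q hq
    simp only [hT, Finset.mem_erase, Finset.mem_inter] at hq
    exact ⟨hq.2.1, hq.2.2, hq.1⟩
  have hTP : ∀ q ∈ T, q ∈ P := fun q hq => hC (hTC q hq).1
  set W := T.image y ∪ T.image f with hW
  have memW : ∀ v, v ∈ W ↔ ∃ q ∈ T, IsEnd y f q v := by
    intro v
    simp only [hW, Finset.mem_union, Finset.mem_image, IsEnd]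
    grind
  have hyW : y p ∉ W := by
    intro hy
    obtain ⟨q, hq, hqv⟩ := (memW _).1 hy
    exact (hTC q hq).2.2 (h.disj_chosen (hTP q hq) (hC hpC) hqv (τ := σ) (Or.inl rfl))
  have hcardW : W.card = 2 * T.card := by
    rw [hW, Finset.card_union_of_disjoint, Finset.card_image_of_injOn, Finset.card_image_of_injOn]
    · ring
    · intro q hq r hr hqr
      exact h.disj_chosen (hTP q hq) (hTP r hr) (σ := σ) (τ := σ) (v := f q) (Or.inr rfl)
        (Or.inr hqr)
    · intro q hq r hr hqr
      exact h.disj_chosen (hTP q hq) (hTP r hr) (σ := σ) (τ := σ) (v := y q) (Or.inl rfl)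
        (Or.inl hqr)
    · rw [Finset.disjoint_left]
      intro v hv hv'
      obtain ⟨q, hq, rfl⟩ := Finset.mem_image.1 hv
      obtain ⟨r, hr, hrq⟩ := Finset.mem_image.1 hv'
      have hqr : q = r := h.disj_chosen (hTP q hq) (hTP r hr) (σ := σ) (τ := σ) (v := y q)
        (Or.inl rfl) (Or.inr hrq.symm)
      subst hqr
      exact h.end_ne q (hTP q hq) (σ q) hrq
  have key : ∀ v, (∃ r ∈ C, IsEnd y f r v) → (∃ r ∈ S, IsEnd y (chosen t τ) r v) →
      v ∈ insert (y p) W := by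
    rintro v ⟨r, hrC, hrv⟩ ⟨r', hrS, hrv'⟩
    have hrr : r = r' := h.disj_chosen (hC hrC) (hS hrS) hrv hrv'
    subst hrr
    rw [Finset.mem_insert]
    by_cases hrp : r = p
    · left
      subst hrp
      rcases hrv with hrv | hrv
      · exact hrv
      · rcases hrv' with hrv' | hrv'
        · exact hrv'
        · exfalso
          apply hends
          rw [← hp]
          exact hrv'.symm.trans hrv
    · right
      exact (memW v).2 ⟨r, by simp [hT, hrp, hrC, hrS], hrv⟩
  have heven := even_card_of_involution mate h.invol h.mate_ne (insert (y p) W) (by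
    intro v hv
    rcases Finset.mem_insert.1 hv with rfl | hv
    · exact key _ (hCc p hpC _ (Or.inl rfl)) (hSc p hpS _ (Or.inl rfl))
    · obtain ⟨q, hq, hqv⟩ := (memW _).1 hv
      obtain ⟨hqC, hqS, hqp⟩ := hTC q hq
      refine key _ (hCc q hqC _ hqv) (hSc q hqS _ ?_)
      rcases hqv with hqv | hqv
      · exact Or.inl hqv
      · right
        rw [hqv, hf]
        simp only [chosen, hστ q hqp])
  rw [Finset.card_insert_of_notMem hyW, hcardW] at heven
  revert heven
  rw [imp_false, Nat.not_even_iff_odd]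
  exact odd_two_mul_add_one _

/-- A path whose newly chosen edge has an endpoint matched to a vertex that is not chosen lies on
no alternating cycle. -/
theorem notMem_closed_of_mate (h : EdgeChoice mate P y t) {σ τ : ι → Bool} {p r : ι}
    (hr : r ∈ P) (hne : t true r ≠ t false r) (hτ : τ r = !σ r) {v : α}
    (hv : IsEnd y (chosen t τ) p v) (hvr : mate v = t (σ r) r) {S : Finset ι} (hS : S ⊆ P)
    (hSc : MateClosed mate y (chosen t τ) S) : p ∉ S := by
  intro hpS
  obtain ⟨q, hq, hqv⟩ := hSc p hpS v hv
  have hqr : q = r := h.disj_chosen (hS hq) hr hqv (τ := σ) (Or.inr hvr)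
  subst hqr
  rw [hvr] at hqv
  rcases hqv with hqv | hqv
  · exact h.end_ne q hr _ hqv
  · rw [chosen, hτ] at hqv
    cases hs : σ q
    · rw [hs] at hqv
      exact hne hqv.symm
    · rw [hs] at hqv
      exact hne hqv

/-- The members of `P` lying on an alternating cycle. -/
noncomputable def cyclic (mate : α → α) (P : Finset ι) (y f : ι → α) : Finset ι :=
  P.filter fun p => ∃ S ⊆ P, MateClosed mate y f S ∧ p ∈ S

theorem mateClosed_congr {f g : ι → α} {S : Finset ι} (hfg : ∀ p ∈ S, f p = g p)
    (hf : MateClosed mate y f S) : MateClosed mate y g S := by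
  intro p hp v hv
  obtain ⟨q, hq, hqv⟩ := hf p hp v (by rwa [IsEnd, hfg p hp])
  exact ⟨q, hq, by rwa [IsEnd, ← hfg q hq]⟩

theorem cyclic_subset_of_switch {σ τ : ι → Bool} {p : ι} (hστ : ∀ q, q ≠ p → τ q = σ q)
    (hp : ∀ S ⊆ P, MateClosed mate y (chosen t τ) S → p ∉ S) :
    cyclic mate P y (chosen t τ) ⊆ cyclic mate P y (chosen t σ) := by
  intro q hq
  rw [cyclic, Finset.mem_filter] at hq ⊢
  obtain ⟨hqP, S, hS, hSc, hqS⟩ := hq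
  refine ⟨hqP, S, hS, mateClosed_congr ?_ hSc, hqS⟩
  intro r hr
  rw [chosen, chosen, hστ r]
  rintro rfl
  exact hp S hS hSc hr

/-- If the choice `σ` leaves an alternating cycle, then some path can be switched so that fewer
paths lie on alternating cycles of `σ` and of the opposite choice. -/
theorem exists_better (h : EdgeChoice mate P y t) (σ : ι → Bool) {C : Finset ι} (hC : C ⊆ P)
    (hCc : MateClosed mate y (chosen t σ) C) (hne : C.Nonempty) :
    ∃ τ : ι → Bool, (cyclic mate P y (chosen t τ)).card < (cyclic mate P y (chosen t σ)).card ∧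
      (cyclic mate P y (chosen t fun q => !τ q)).card ≤
        (cyclic mate P y (chosen t fun q => !σ q)).card := by
  obtain ⟨p, hpC, r, hrC, hpr, v, hv, hvr⟩ : ∃ p ∈ C, ∃ r ∈ C, r ≠ p ∧
      ∃ v, IsEnd y (chosen t σ) p v ∧ mate v = t (σ r) r := by
    obtain ⟨p, hp⟩ := hne
    obtain ⟨r, hr, hrv⟩ := hCc p hp (t (σ p) p) (Or.inr rfl)
    rcases hrv with hrv | hrv
    · refine ⟨r, hr, p, hp, ?_, y r, Or.inl rfl, ?_⟩
      · rintro rfl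
        exact h.not_mate p (hC hp) _ hrv
      · rw [← hrv, h.invol]
    · refine ⟨p, hp, r, hr, ?_, _, Or.inr rfl, hrv⟩
      rintro rfl
      exact h.mate_ne _ hrv
  have hτ : ∀ q, q ≠ p → Function.update σ p (!σ p) q = σ q :=
    fun q hq => Function.update_of_ne hq _ _
  have hτp : Function.update σ p (!σ p) p = !σ p := Function.update_self _ _ _
  have hout : ∀ S ⊆ P, MateClosed mate y (chosen t (Function.update σ p (!σ p))) S → p ∉ S :=
    fun S hS hSc => h.notMem_closed_of_switch hτ hτp hC hS hCc hSc hpC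
  refine ⟨Function.update σ p (!σ p), Finset.card_lt_card ?_, Finset.card_le_card ?_⟩
  · refine ⟨cyclic_subset_of_switch hτ hout, fun hsub => ?_⟩
    have hp : p ∈ cyclic mate P y (chosen t σ) :=
      Finset.mem_filter.2 ⟨hC hpC, C, hC, hCc, hpC⟩
    obtain ⟨-, S, hS, hSc, hpS⟩ := Finset.mem_filter.1 (hsub hp)
    exact hout S hS hSc hpS
  · refine cyclic_subset_of_switch (p := p) (fun q hq => by rw [hτ q hq]) ?_
    intro S hS hSc
    refine h.notMem_closed_of_mate (σ := σ) (hC hrC) (h.ne_of_mem_closed hC hCc hrC)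
      (by simp only [hτ r hpr]) (v := v) ?_ hvr hS hSc
    simpa only [IsEnd, chosen, hτp, Bool.not_not] using hv

/-- Some choice and its opposite both leave no alternating cycle. -/
theorem exists_acyclic (h : EdgeChoice mate P y t) :
    ∃ σ : ι → Bool, (∀ S ⊆ P, MateClosed mate y (chosen t σ) S → S = ∅) ∧
      ∀ S ⊆ P, MateClosed mate y (chosen t fun q => !σ q) S → S = ∅ := by
  let φ : (ι → Bool) → ℕ := fun σ => (cyclic mate P y (chosen t σ)).card +
    (cyclic mate P y (chosen t fun q => !σ q)).card
  obtain ⟨σ, hσ⟩ : ∃ σ, ∀ τ, φ σ ≤ φ τ :=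
    ⟨Function.argmin φ, fun τ => Function.argmin_le φ τ⟩
  refine ⟨σ, fun S hS hSc => ?_, fun S hS hSc => ?_⟩
  · by_contra hne
    obtain ⟨τ, h₁, h₂⟩ := h.exists_better σ hS hSc (Finset.nonempty_iff_ne_empty.2 hne)
    have := hσ τ
    simp only [φ] at this
    omega
  · by_contra hne
    obtain ⟨τ, h₁, h₂⟩ := h.exists_better _ hS hSc (Finset.nonempty_iff_ne_empty.2 hne)
    have h₃ : (cyclic mate P y (chosen t fun q => !τ q)).card ≤
        (cyclic mate P y (chosen t σ)).card := by simpa only [Bool.not_not] using h₂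
    have h₄ : φ σ ≤ (cyclic mate P y (chosen t fun q => !τ q)).card +
        (cyclic mate P y (chosen t τ)).card := by
      simpa only [φ, Bool.not_not] using hσ fun q => !τ q
    simp only [φ] at h₄
    omega

end EdgeChoice

/-- The partner function of a perfect matching. -/
theorem exists_mate (M : Finset (Sym2 V)) (hM : IsMatching M)
    (hcard : 2 * M.card = Fintype.card V) :
    ∃ mate : V → V, (∀ v u, s(v, u) ∈ M ↔ mate v = u) ∧ (∀ v, mate v ≠ v) ∧
      ∀ v, mate (mate v) = v := by
  have hcov : M.biUnion Sym2.toFinset = Finset.univ := by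
    rw [← Finset.card_eq_iff_eq_univ, Finset.card_biUnion, ← hcard]
    · rw [Finset.sum_congr rfl fun e he => Sym2.card_toFinset_of_not_isDiag e (hM.1 e he)]
      simp [mul_comm]
    · intro e he f hf hef
      rw [Function.onFun, Finset.disjoint_left]
      intro v hv hv'
      exact hM.2 e he f hf hef v (Sym2.mem_toFinset.1 hv) (Sym2.mem_toFinset.1 hv')
  have hex : ∀ v, ∃ u, s(v, u) ∈ M := by
    intro v
    have hv : v ∈ M.biUnion Sym2.toFinset := hcov ▸ Finset.mem_univ v
    obtain ⟨e, he, hve⟩ := Finset.mem_biUnion.1 hv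
    obtain ⟨u, rfl⟩ := Sym2.mem_toFinset.1 hve
    exact ⟨u, he⟩
  choose mate hmate using hex
  have huniq : ∀ v u, s(v, u) ∈ M → mate v = u := by
    intro v u hu
    by_contra hne
    refine hM.2 _ (hmate v) _ hu ?_ v (Sym2.mem_mk_left _ _) (Sym2.mem_mk_left _ _)
    exact fun h => hne (Sym2.congr_right.1 h)
  refine ⟨mate, fun v u => ⟨huniq v u, fun h => h ▸ hmate v⟩, fun v hv => ?_, fun v => ?_⟩
  · exact hM.1 _ (hmate v) (by simp [hv])
  · exact huniq _ _ (by rw [Sym2.eq_swap]; exact hmate v)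

/-- The end of the path `p` selected by `s`, except that an edge of `M` is never selected if the
other edge does not lie in `M`. -/
noncomputable def tip (M : Finset (Sym2 V)) (s : Bool) (p : P3 V) : V :=
  if s(p.x, p.y) ∈ M then p.z else if s(p.y, p.z) ∈ M then p.x else if s then p.x else p.z


omit [Fintype V] [DecidableEq V] in
theorem mem_psel {P : Finset (P3 V)} {c : P3 V → Prop} {p : P3 V} :
    p ∈ psel P c ↔ p ∈ P ∧ c p := by
  rw [psel, Finset.mem_filter]

omit [Fintype V] [DecidableEq V] in
theorem sum_psel_add_sum_psel_not (P : Finset (P3 V)) (c : P3 V → Prop) (g : P3 V → ℝ) :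
    ∑ p ∈ psel P c, g p + ∑ p ∈ psel P (fun p => ¬ c p), g p = ∑ p ∈ P, g p := by
  rw [← Finset.sum_filter_add_sum_filter_not P c]
  congr 2
  ext p
  rw [mem_psel, Finset.mem_filter]

omit [Fintype V] in
theorem tip_eq (M : Finset (Sym2 V)) (s : Bool) (p : P3 V) :
    tip M s p = p.x ∨ tip M s p = p.z := by
  unfold tip
  split_ifs <;> simp

omit [Fintype V] in
theorem mem_verts_of_isEnd {M : Finset (Sym2 V)} {s : Bool} {p : P3 V} {v : V}
    (h : IsEnd P3.y (tip M s) p v) : v ∈ p.verts := by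
  simp only [P3.verts, Finset.mem_insert, Finset.mem_singleton]
  rcases h with h | h
  · exact Or.inr (Or.inl h)
  · rcases tip_eq M s p with h' | h'
    · exact Or.inl (h.trans h')
    · exact Or.inr (Or.inr (h.trans h'))

theorem eq_of_mem_verts {P : Finset (P3 V)} (hP : IsPacking P) {p q : P3 V} (hp : p ∈ P)
    (hq : q ∈ P) {v : V} (hpv : v ∈ p.verts) (hqv : v ∈ q.verts) : p = q := by
  by_contra hne
  exact Finset.disjoint_left.1 (hP.2.1 p hp q hq hne) hpv hqv

theorem edgeChoice_tip {P : Finset (P3 V)} (hP : IsPacking P) {M : Finset (Sym2 V)}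
    {mate : V → V} (hmem : ∀ v u, s(v, u) ∈ M ↔ mate v = u) (hne : ∀ v, mate v ≠ v)
    (hinv : ∀ v, mate (mate v) = v) : EdgeChoice mate P P3.y (tip M) where
  invol := hinv
  mate_ne := hne
  disj := fun p hp q hq _ _ _ hpv hqv =>
    eq_of_mem_verts hP hp hq (mem_verts_of_isEnd hpv) (mem_verts_of_isEnd hqv)
  end_ne := by
    intro p _ s h
    rcases tip_eq M s p with h' | h'
    · exact p.hxy (h'.symm.trans h)
    · exact p.hyz (h.symm.trans h')
  not_mate := by
    intro p _ s h
    have h₁ := p.hxz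
    have h₂ := hinv p.x
    have h₃ := hinv p.z
    have h₄ := hmem p.x p.y
    have h₅ := hmem p.y p.z
    have h₆ := hinv p.y
    unfold tip at h
    split_ifs at h <;> grind
  forced := by
    intro p hp h q hq s hqv
    have hcases : s(p.x, p.y) ∈ M ∨ s(p.x, p.y) ∉ M ∧ s(p.y, p.z) ∈ M := by
      by_contra hcon
      push Not at hcon
      have hxy : s(p.x, p.y) ∉ M := hcon.1
      have hyz : s(p.y, p.z) ∉ M := hcon.2 hxy
      simp only [tip, if_neg hxy, if_neg hyz] at h
      exact p.hxz (by simpa using h)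
    rcases hcases with hxy | ⟨hxy, hyz⟩
    · have hm : mate p.y = p.x := (hmem _ _).1 (by rwa [Sym2.eq_swap])
      rw [hm] at hqv
      have hqp : q = p := eq_of_mem_verts hP hq hp (mem_verts_of_isEnd hqv) (by simp [P3.verts])
      subst hqp
      rw [IsEnd, tip, if_pos hxy] at hqv
      exact hqv.elim q.hxy q.hxz
    · have hm : mate p.y = p.z := (hmem _ _).1 hyz
      rw [hm] at hqv
      have hqp : q = p := eq_of_mem_verts hP hq hp (mem_verts_of_isEnd hqv) (by simp [P3.verts])
      subst hqp
      rw [IsEnd, tip, if_neg hxy, if_pos hyz] at hqv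
      exact hqv.elim q.hyz.symm q.hxz.symm

omit [Fintype V] in
theorem mem_verts_of_mem_edges {p : P3 V} {e : Sym2 V} (he : e ∈ p.edges) {v : V} (hv : v ∈ e) :
    v ∈ p.verts := by
  simp only [P3.edges, P3.verts, Finset.mem_insert, Finset.mem_singleton] at he ⊢
  rcases he with rfl | rfl <;> rw [Sym2.mem_iff] at hv <;> tauto

omit [Fintype V] in
theorem y_mem_of_mem_edges {p : P3 V} {e : Sym2 V} (he : e ∈ p.edges) : p.y ∈ e := by
  simp only [P3.edges, Finset.mem_insert, Finset.mem_singleton] at he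
  rcases he with rfl | rfl <;> simp

theorem eq_of_mem_edges {P : Finset (P3 V)} (hP : IsPacking P) {p q : P3 V} (hp : p ∈ P)
    (hq : q ∈ P) {e : Sym2 V} (hpe : e ∈ p.edges) (hqe : e ∈ q.edges) : p = q :=
  eq_of_mem_verts hP hp hq (mem_verts_of_mem_edges hpe (y_mem_of_mem_edges hpe))
    (mem_verts_of_mem_edges hqe (y_mem_of_mem_edges hpe))

omit [Fintype V] in
theorem tipEdge_mem_edges (M : Finset (Sym2 V)) (s : Bool) (p : P3 V) :
    s(p.y, tip M s p) ∈ p.edges := by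
  rcases tip_eq M s p with h | h <;> rw [h] <;> simp [P3.edges, Sym2.eq_swap]

theorem cw_Esub {P S : Finset (P3 V)} (hP : IsPacking P) (hS : S ⊆ P) (w : Sym2 V → ℝ)
    (M : Finset (Sym2 V)) :
    cw w M (Esub S) = ∑ p ∈ S, (cost w M s(p.x, p.y) + cost w M s(p.y, p.z)) := by
  rw [cw, Esub, Finset.sum_biUnion]
  · refine Finset.sum_congr rfl fun p _ => ?_
    rw [P3.edges, Finset.sum_pair]
    rw [Sym2.eq_swap]
    exact fun h => p.hxz (Sym2.congr_right.1 h)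
  · intro p hp q hq hpq
    rw [Function.onFun, Finset.disjoint_left]
    exact fun e he he' => hpq (eq_of_mem_edges hP (hS hp) (hS hq) he he')

theorem cw_tipEdges {P S : Finset (P3 V)} (hP : IsPacking P) (hS : S ⊆ P) (w : Sym2 V → ℝ)
    (M : Finset (Sym2 V)) (σ : P3 V → Bool) :
    cw w M (S.image fun p => s(p.y, chosen (tip M) σ p)) =
      ∑ p ∈ S, cost w M s(p.y, chosen (tip M) σ p) := by
  rw [cw, Finset.sum_image]
  intro p hp q hq hpq
  have h₁ : s(p.y, chosen (tip M) σ p) ∈ p.edges := tipEdge_mem_edges M _ p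
  have h₂ : s(q.y, chosen (tip M) σ q) ∈ q.edges := tipEdge_mem_edges M _ q
  exact eq_of_mem_edges hP (hS hp) (hS hq) h₁ (by rw [show s(p.y, _) = _ from hpq]; exact h₂)

/-- The edges selected on an independent set of paths satisfy the requirements on `N`. -/
theorem tipEdges_spec {P S : Finset (P3 V)} (hP : IsPacking P) (hS : S ⊆ P) {M : Finset (Sym2 V)}
    {mate : V → V} (hmem : ∀ v u, s(v, u) ∈ M ↔ mate v = u) (hne : ∀ v, mate v ≠ v)
    (hinv : ∀ v, mate (mate v) = v) (σ : P3 V → Bool)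
    (hind : MateIndep mate P3.y (chosen (tip M) σ) S) :
    (S.image fun p => s(p.y, chosen (tip M) σ p)).card = S.card ∧
    (∀ e ∈ S.image fun p => s(p.y, chosen (tip M) σ p), ¬ e.IsDiag) ∧
    (∀ e ∈ S.image fun p => s(p.y, chosen (tip M) σ p), e ∉ M) ∧
    (∀ f ∈ M, ∀ e₁ ∈ S.image fun p => s(p.y, chosen (tip M) σ p),
      ∀ e₂ ∈ S.image fun p => s(p.y, chosen (tip M) σ p),
        shares f e₁ → shares f e₂ → e₁ = e₂) := by
  have hE := edgeChoice_tip hP hmem hne hinv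
  refine ⟨?_, ?_, ?_, ?_⟩
  · refine Finset.card_image_of_injOn fun p hp q hq hpq => ?_
    have h₁ : s(p.y, chosen (tip M) σ p) ∈ p.edges := tipEdge_mem_edges M _ p
    have h₂ : s(q.y, chosen (tip M) σ q) ∈ q.edges := tipEdge_mem_edges M _ q
    exact eq_of_mem_edges hP (hS hp) (hS hq) h₁ (by rw [show s(p.y, _) = _ from hpq]; exact h₂)
  · intro e he
    obtain ⟨p, hp, rfl⟩ := Finset.mem_image.1 he
    rw [Sym2.mk_isDiag_iff]
    exact fun h => hE.end_ne p (hS hp) _ h.symm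
  · intro e he heM
    obtain ⟨p, hp, rfl⟩ := Finset.mem_image.1 he
    rw [Sym2.eq_swap] at heM
    exact hE.not_mate p (hS hp) _ ((hmem _ _).1 heM)
  · rintro f hf e₁ he₁ e₂ he₂ ⟨v, hvf, hv⟩ ⟨u, huf, hu⟩
    obtain ⟨p, hp, rfl⟩ := Finset.mem_image.1 he₁
    obtain ⟨q, hq, rfl⟩ := Finset.mem_image.1 he₂
    rw [Sym2.mem_iff] at hv hu
    have hpq : p = q := by
      by_contra hpq
      by_cases hvu : v = u
      · subst hvu
        exact hpq (hE.disj_chosen (hS hp) (hS hq) hv hu)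
      · obtain rfl := (Sym2.mem_and_mem_iff hvu).1 ⟨hvf, huf⟩
        refine hind p hp q hq hpq v hv ?_
        rw [(hmem _ _).1 hf]
        exact hu
    rw [hpq]

omit [Fintype V] [DecidableEq V] in
theorem not_both_mem {M : Finset (Sym2 V)} {mate : V → V}
    (hmem : ∀ v u, s(v, u) ∈ M ↔ mate v = u) {p : P3 V} (hxy : s(p.x, p.y) ∈ M) :
    s(p.y, p.z) ∉ M := by
  intro hyz
  rw [Sym2.eq_swap] at hxy
  exact p.hxz (((hmem _ _).1 hxy).symm.trans ((hmem _ _).1 hyz))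

omit [Fintype V] in
theorem Esub_sdiff_eq_image {M : Finset (Sym2 V)} {mate : V → V}
    (hmem : ∀ v u, s(v, u) ∈ M ↔ mate v = u) {S : Finset (P3 V)}
    (hS : ∀ p ∈ S, ¬(s(p.x, p.y) ∉ M ∧ s(p.y, p.z) ∉ M)) (σ : P3 V → Bool) :
    Esub S \ M = S.image fun p => s(p.y, chosen (tip M) σ p) := by
  ext e
  simp only [Finset.mem_sdiff, Esub, Finset.mem_biUnion, Finset.mem_image, P3.edges,
    Finset.mem_insert, Finset.mem_singleton]
  constructor
  · rintro ⟨⟨p, hp, he⟩, heM⟩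
    refine ⟨p, hp, ?_⟩
    rcases he with rfl | rfl
    · have hyz : s(p.y, p.z) ∈ M := by
        by_contra h
        exact hS p hp ⟨heM, h⟩
      rw [chosen, tip, if_neg heM, if_pos hyz, Sym2.eq_swap]
    · have hxy : s(p.x, p.y) ∈ M := by
        by_contra h
        exact hS p hp ⟨h, heM⟩
      rw [chosen, tip, if_pos hxy]
  · rintro ⟨p, hp, rfl⟩
    by_cases hxy : s(p.x, p.y) ∈ M
    · have hyz := not_both_mem hmem hxy
      rw [chosen, tip, if_pos hxy]
      exact ⟨⟨p, hp, Or.inr rfl⟩, hyz⟩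
    · have hyz : s(p.y, p.z) ∈ M := by
        by_contra h
        exact hS p hp ⟨hxy, h⟩
      rw [chosen, tip, if_neg hxy, if_pos hyz, Sym2.eq_swap]
      exact ⟨⟨p, hp, Or.inl rfl⟩, hxy⟩

/-- The costs of the edges selected by `σ` and by the opposite choice add up to the total cost. -/
theorem sum_cost_chosen {P : Finset (P3 V)} (hP : IsPacking P) (w : Sym2 V → ℝ)
    {M : Finset (Sym2 V)} {mate : V → V} (hmem : ∀ v u, s(v, u) ∈ M ↔ mate v = u)
    (σ : P3 V → Bool) :
    ∑ p ∈ P, cost w M s(p.y, chosen (tip M) σ p) +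
        ∑ p ∈ P, cost w M s(p.y, chosen (tip M) (fun q => !σ q) p) =
      cw w M (Esub (psel P fun p => s(p.x, p.y) ∉ M ∧ s(p.y, p.z) ∉ M)) +
        2 * cw w M (Esub (psel P fun p => ¬(s(p.x, p.y) ∉ M ∧ s(p.y, p.z) ∉ M)) \ M) := by
  have hsel : ∀ c : P3 V → Prop, psel P c ⊆ P := fun c => Finset.filter_subset _ _
  have hall : ∀ p ∈ psel P fun p => ¬(s(p.x, p.y) ∉ M ∧ s(p.y, p.z) ∉ M),
      ¬(s(p.x, p.y) ∉ M ∧ s(p.y, p.z) ∉ M) := fun p hp => (mem_psel.1 hp).2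
  have h₂ := Esub_sdiff_eq_image hmem hall
  rw [two_mul]
  nth_rewrite 1 [h₂ σ]
  rw [h₂ fun q => !σ q, cw_tipEdges hP (hsel _), cw_tipEdges hP (hsel _), cw_Esub hP (hsel _),
    ← Finset.sum_add_distrib, ← Finset.sum_add_distrib,
    ← sum_psel_add_sum_psel_not P fun p => s(p.x, p.y) ∉ M ∧ s(p.y, p.z) ∉ M]
  congr 1
  refine Finset.sum_congr rfl fun p hp => ?_
  obtain ⟨hxy, hyz⟩ := (mem_psel.1 hp).2
  simp only [chosen, tip, if_neg hxy, if_neg hyz]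
  rw [Sym2.eq_swap (a := p.x)]
  by_cases hs : σ p = true
  · simp [hs]
  · simp [hs, add_comm]

theorem cw_Esub_sdiff {P : Finset (P3 V)} (hP : IsPacking P) (w : Sym2 V → ℝ)
    (M : Finset (Sym2 V)) :
    cw w M (Esub P \ M) =
      cw w M (Esub (psel P fun p => s(p.x, p.y) ∉ M ∧ s(p.y, p.z) ∉ M)) +
        cw w M (Esub (psel P fun p => ¬(s(p.x, p.y) ∉ M ∧ s(p.y, p.z) ∉ M)) \ M) := by
  unfold cw
  rw [← Finset.sum_union]
  · congr 1
    ext e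
    simp only [Finset.mem_sdiff, Finset.mem_union, Esub, Finset.mem_biUnion, mem_psel,
      P3.edges, Finset.mem_insert, Finset.mem_singleton]
    constructor
    · rintro ⟨⟨p, hp, he⟩, heM⟩
      by_cases h : s(p.x, p.y) ∉ M ∧ s(p.y, p.z) ∉ M
      · exact Or.inl ⟨p, ⟨hp, h⟩, he⟩
      · exact Or.inr ⟨⟨p, ⟨hp, h⟩, he⟩, heM⟩
    · rintro (⟨p, ⟨hp, hxy, hyz⟩, he⟩ | ⟨⟨p, ⟨hp, -⟩, he⟩, heM⟩)
      · refine ⟨⟨p, hp, he⟩, ?_⟩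
        rcases he with rfl | rfl
        · exact hxy
        · exact hyz
      · exact ⟨⟨p, hp, he⟩, heM⟩
  · rw [Finset.disjoint_left]
    intro e he he'
    obtain ⟨p, hp, hpe⟩ := Finset.mem_biUnion.1 he
    obtain ⟨q, hq, hqe⟩ := Finset.mem_biUnion.1 (Finset.mem_sdiff.1 he').1
    have hp' := mem_psel.1 hp
    have hq' := mem_psel.1 hq
    have hpq := eq_of_mem_edges hP hp'.1 hq'.1 hpe hqe
    subst hpq
    exact hq'.2 hp'.2

theorem statement_3 (n : ℕ) (hn : Fintype.card V = n) (h3 : 3 ∣ n) (h2 : 2 ∣ n)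
    (w : Sym2 V → ℝ) (hw : ∀ e : Sym2 V, 0 ≤ w e)
    (Pstar : Finset (P3 V)) (hP : IsMaxPacking w Pstar)
    (M : Finset (Sym2 V)) (hM : IsMatching M) (hMcard : M.card = n / 2) :
    (∃ N : Finset (Sym2 V), N.card = n / 6 ∧ (∀ e ∈ N, ¬ e.IsDiag) ∧ (∀ e ∈ N, e ∉ M) ∧
      (∀ f ∈ M, ∀ e₁ ∈ N, ∀ e₂ ∈ N, shares f e₁ → shares f e₂ → e₁ = e₂) ∧
      (1 / 4 : ℝ) * cw w M (Esub (psel Pstar fun p => s(p.x, p.y) ∉ M ∧ s(p.y, p.z) ∉ M)) +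
        (1 / 2 : ℝ) *
          cw w M (Esub (psel Pstar fun p => ¬(s(p.x, p.y) ∉ M ∧ s(p.y, p.z) ∉ M)) \ M) ≤
        cw w M N) ∧
    (1 / 4 : ℝ) * cw w M (Esub (psel Pstar fun p => s(p.x, p.y) ∉ M ∧ s(p.y, p.z) ∉ M)) +
      (1 / 2 : ℝ) *
        cw w M (Esub (psel Pstar fun p => ¬(s(p.x, p.y) ∉ M ∧ s(p.y, p.z) ∉ M)) \ M) =
      (1 / 4 : ℝ) * cw w M (Esub Pstar \ M) +
      (1 / 4 : ℝ) *
        cw w M (Esub (psel Pstar fun p => ¬(s(p.x, p.y) ∉ M ∧ s(p.y, p.z) ∉ M)) \ M) := by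
  have hPk := hP.1
  refine ⟨?_, by rw [cw_Esub_sdiff hPk w M]; ring⟩
  obtain ⟨mate, hmem, hne, hinv⟩ := exists_mate M hM (by omega)
  have hE := edgeChoice_tip hPk hmem hne hinv
  have hcard : Pstar.card = 2 * (n / 6) := by
    have := hPk.1
    omega
  obtain ⟨σ, hσ, hσ'⟩ := hE.exists_acyclic
  have hsplit : ∀ τ : P3 V → Bool,
      (∀ S ⊆ Pstar, MateClosed mate P3.y (chosen (tip M) τ) S → S = ∅) →
      ∃ F₁ F₂ : Finset (P3 V), F₁ ⊆ Pstar ∧ F₂ ⊆ Pstar ∧ F₁.card = n / 6 ∧ F₂.card = n / 6 ∧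
        MateIndep mate P3.y (chosen (tip M) τ) F₁ ∧ MateIndep mate P3.y (chosen (tip M) τ) F₂ ∧
        ∑ p ∈ F₁, cost w M s(p.y, chosen (tip M) τ p) +
          ∑ p ∈ F₂, cost w M s(p.y, chosen (tip M) τ p) =
            ∑ p ∈ Pstar, cost w M s(p.y, chosen (tip M) τ p) := by
    intro τ hτ
    obtain ⟨F₁, F₂, hd, hU, hi₁, hi₂, hc₁, hc₂⟩ := exists_even_split mate hinv P3.y
      (chosen (tip M) τ) Pstar (fun p hp q hq v => hE.disj_chosen hp hq) hτ (n / 6) hcard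
    refine ⟨F₁, F₂, hU ▸ Finset.subset_union_left, hU ▸ Finset.subset_union_right, hc₁, hc₂,
      hi₁, hi₂, ?_⟩
    rw [← Finset.sum_union hd, hU]
  have hfin : ∀ (τ : P3 V → Bool) (F : Finset (P3 V)), F ⊆ Pstar → F.card = n / 6 →
      MateIndep mate P3.y (chosen (tip M) τ) F →
      (1 / 4 : ℝ) * cw w M (Esub (psel Pstar fun p => s(p.x, p.y) ∉ M ∧ s(p.y, p.z) ∉ M)) +
        (1 / 2 : ℝ) *
          cw w M (Esub (psel Pstar fun p => ¬(s(p.x, p.y) ∉ M ∧ s(p.y, p.z) ∉ M)) \ M) ≤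
        ∑ p ∈ F, cost w M s(p.y, chosen (tip M) τ p) →
      ∃ N : Finset (Sym2 V), N.card = n / 6 ∧ (∀ e ∈ N, ¬ e.IsDiag) ∧ (∀ e ∈ N, e ∉ M) ∧
        (∀ f ∈ M, ∀ e₁ ∈ N, ∀ e₂ ∈ N, shares f e₁ → shares f e₂ → e₁ = e₂) ∧
        (1 / 4 : ℝ) * cw w M (Esub (psel Pstar fun p => s(p.x, p.y) ∉ M ∧ s(p.y, p.z) ∉ M)) +
          (1 / 2 : ℝ) *
            cw w M (Esub (psel Pstar fun p => ¬(s(p.x, p.y) ∉ M ∧ s(p.y, p.z) ∉ M)) \ M) ≤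
          cw w M N := by
    intro τ F hF hFc hi hle
    obtain ⟨h₁, h₂, h₃, h₄⟩ := tipEdges_spec hPk hF hmem hne hinv τ hi
    exact ⟨_, h₁.trans hFc, h₂, h₃, h₄, by rwa [cw_tipEdges hPk hF]⟩
  obtain ⟨F₁, F₂, hF₁, hF₂, hc₁, hc₂, hi₁, hi₂, hs⟩ := hsplit σ hσ
  obtain ⟨F₃, F₄, hF₃, hF₄, hc₃, hc₄, hi₃, hi₄, hs'⟩ := hsplit _ hσ'
  have htot := sum_cost_chosen hPk w hmem σ
  by_contra hcon
  have l₁ := lt_of_not_ge fun h => hcon (hfin _ F₁ hF₁ hc₁ hi₁ h)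
  have l₂ := lt_of_not_ge fun h => hcon (hfin _ F₂ hF₂ hc₂ hi₂ h)
  have l₃ := lt_of_not_ge fun h => hcon (hfin _ F₃ hF₃ hc₃ hi₃ h)
  have l₄ := lt_of_not_ge fun h => hcon (hfin _ F₄ hF₄ hc₄ hi₄ h)
  linarith

end MW3PP
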